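/- Let μ and ν be compactly supported probability measures on ℝ^d and let r, u, v be positive real numbers with r² = u + v. Then s_r(μ * ν) ≤ (r²/2) · Γ(d/2) · (d/(2e))^{−d/2} · √( D⁺_u H(μ * n_u) · D⁺_v H(ν * n_v) ), where D⁺_u H(μ * n_u) denotes the right-hand derivative of the function t ↦ H(μ * n_t) at t = u (which exists), and similarly for D⁺_v H(ν * n_v). -/

import Mathlib

open MeasureTheory Real

/-- Density of the centered Gaussian on `ℝ^d` with covariance matrix `y • I`. -/
noncomputable def gaussD (d : ℕ) (y : ℝ) (x : EuclideanSpace ℝ (Fin d)) : ℝ :=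
  (2 * Real.pi * y) ^ (-(d : ℝ) / 2) * Real.exp (-‖x‖ ^ 2 / (2 * y))

/-- `∂/∂y n_y (x)`. -/
noncomputable def gaussDy (d : ℕ) (y : ℝ) (x : EuclideanSpace ℝ (Fin d)) : ℝ :=
  deriv (fun u => gaussD d u x) y

/-- The detail of a measure `μ` on `ℝ^d` around the scale `r`. -/
noncomputable def detail (d : ℕ) (μ : Measure (EuclideanSpace ℝ (Fin d))) (r : ℝ) : ℝ :=
  r ^ 2 * (Real.Gamma ((d : ℝ) / 2) / 2) * ((d : ℝ) / (2 * Real.exp 1)) ^ (-(d : ℝ) / 2) *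
    ∫ x, |∫ z, gaussDy d (r ^ 2) (x - z) ∂μ|

/-- The differential entropy `H(μ * n_y) = ∫ -f log f` where `f` is the density of `μ * n_y`. -/
noncomputable def entG (d : ℕ) (μ : Measure (EuclideanSpace ℝ (Fin d))) (y : ℝ) : ℝ :=
  ∫ x, Real.negMulLog (∫ z, gaussD d y (x - z) ∂μ)

/-!
Let `p_t` be the density of `μ * n_t`. The heat equation `∂ₜ n_t = ½ Δ n_t` and an integration by
parts give de Bruijn's identity `dH(p_t)/dt = ½ ∫ |∇p_t|² / p_t`, and by Cauchy–Schwarz this Fisher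
information is at least `(∫ |∇p_t|)²`. Differentiation under the integral sign is justified by
Jensen's inequality: `log p_t(x)` is bounded below by the mean of `log n_t(x - z)`, hence grows at
most quadratically in `x`, whereas `p_t` has a finite second moment.

The semigroup property `n_u * n_v = n_{u+v}`, the heat equation and another integration by parts
show that `∂_y n_y` at `y = u + v` is `½ ∑ᵢ ∂ᵢn_u * ∂ᵢn_v`. Convolving with `μ * ν`, the `L¹` norm
in the detail is at most `½ ‖∇(μ * n_u)‖₁ ‖∇(ν * n_v)‖₁` by Young's inequality, and each factor is
bounded by the square root of a Fisher information.
-/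

open InnerProductSpace Set
open scoped Topology

section General

theorem sq_integral_le_integral_mul_integral_sq_div {α : Type*} [MeasurableSpace α]
    {m : Measure α} {f g : α → ℝ} (hg₀ : ∀ x, 0 < g x) (hf : Integrable f m)
    (hg : Integrable g m) (hfg : Integrable (fun x => f x ^ 2 / g x) m) :
    (∫ x, f x ∂m) ^ 2 ≤ (∫ x, g x ∂m) * ∫ x, f x ^ 2 / g x ∂m := by
  have quadratic_nonneg (s : ℝ) : 0 ≤ (∫ x, g x ∂m) * (s * s) + (-2 * ∫ x, f x ∂m) * s +
      ∫ x, f x ^ 2 / g x ∂m := by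
    calc 0 ≤ ∫ x, (s * g x - f x) ^ 2 / g x ∂m :=
          integral_nonneg fun x => div_nonneg (sq_nonneg _) (hg₀ x).le
      _ = ∫ x, (g x * (s * s) + f x * (-2 * s) + f x ^ 2 / g x) ∂m := by
          refine integral_congr_ae (.of_forall fun x => ?_)
          have := (hg₀ x).ne'
          simp only
          field_simp
          ring
      _ = _ := by
          have hgf : Integrable (fun x => g x * (s * s) + f x * (-2 * s)) m :=
            (hg.mul_const _).add (hf.mul_const _)
          rw [integral_add hgf hfg, integral_add (hg.mul_const _) (hf.mul_const _),
            integral_mul_const, integral_mul_const]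
          ring
  have := discrim_le_zero quadratic_nonneg
  rw [discrim] at this
  linarith

theorem integral_log_le_log_integral {α : Type*} [MeasurableSpace α] {m : Measure α}
    [IsProbabilityMeasure m] {f : α → ℝ} (hf₀ : ∀ x, 0 < f x) (hf : Integrable f m)
    (hlog : Integrable (fun x => log (f x)) m) :
    ∫ x, log (f x) ∂m ≤ log (∫ x, f x ∂m) := by
  have exp_log_eq : exp ∘ (fun x => log (f x)) = f := funext fun x => exp_log (hf₀ x)
  have jensen : exp (∫ x, log (f x) ∂m) ≤ ∫ x, exp (log (f x)) ∂m :=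
    convexOn_exp.map_integral_le continuousOn_exp isClosed_univ (.of_forall fun _ => mem_univ _)
      hlog (by rwa [exp_log_eq])
  simp_rw [exp_log (hf₀ _)] at jensen
  exact (le_log_iff_exp_le ((exp_pos _).trans_le jensen)).2 jensen

variable {E : Type*} [NormedAddCommGroup E] [InnerProductSpace ℝ E] [FiniteDimensional ℝ E]
  [MeasurableSpace E] [BorelSpace E]

theorem integral_mul_trace_eq_neg_integral_apply {f : E → ℝ} {f' : E → E →L[ℝ] ℝ}
    {F : E → E} {F' : E → E →L[ℝ] E}
    (hf : ∀ x, HasFDerivAt f (f' x) x) (hF : ∀ x, HasFDerivAt F (F' x) x)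
    (hfF : Integrable fun x => f x • F x) (hfF' : Integrable fun x => f x • F' x)
    (hf'F : Integrable fun x => ‖f' x‖ * ‖F x‖) :
    ∫ x, f x * LinearMap.trace ℝ E (F' x) = -∫ x, f' x (F x) := by
  let b := stdOrthonormalBasis ℝ E
  have apply_eq_sum (x : E) : f' x (F x) = ∑ i, f' x (b i) * inner ℝ (b i) (F x) := by
    conv_lhs => rw [← b.sum_repr' (F x)]
    simp [mul_comm]
  have f'_meas (v : E) : AEStronglyMeasurable (fun x => f' x v) := by
    simpa only [(hf _).fderiv] using (measurable_fderiv_apply_const ℝ f v).aestronglyMeasurable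
  have F_cont : Continuous F := continuous_iff_continuousAt.2 fun x => (hF x).continuousAt
  have integrable_left (i) : Integrable fun x => f' x (b i) * inner ℝ (b i) (F x) := by
    refine hf'F.mono' ((f'_meas _).mul (by fun_prop)) (.of_forall fun x => ?_)
    rw [norm_mul]
    gcongr
    · simpa using (f' x).le_opNorm (b i)
    · simpa using norm_inner_le_norm (𝕜 := ℝ) (b i) (F x)
  have integrable_right (i) : Integrable fun x => f x * inner ℝ (b i) (F' x (b i)) := by
    have h : Integrable fun x => (f x • F' x) (b i) := hfF'.apply_continuousLinearMap (b i)
    simpa [inner_smul_right] using h.const_inner (𝕜 := ℝ) (b i)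
  have integrable_mid (i) : Integrable fun x => f x * inner ℝ (b i) (F x) := by
    simpa [inner_smul_right] using hfF.const_inner (𝕜 := ℝ) (b i)
  calc ∫ x, f x * LinearMap.trace ℝ E (F' x)
      = ∑ i, ∫ x, f x * inner ℝ (b i) (F' x (b i)) := by
        simp_rw [LinearMap.trace_eq_sum_inner _ b, Finset.mul_sum]
        exact integral_finsetSum _ fun i _ => integrable_right i
    _ = ∑ i, -∫ x, f' x (b i) * inner ℝ (b i) (F x) := Finset.sum_congr rfl fun i _ =>
        integral_bilinear_hasFDerivAt_right_eq_neg_left_of_integrable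
          (B := ContinuousLinearMap.mul ℝ ℝ) (g := fun x => inner ℝ (b i) (F x))
          (g' := fun x => innerSL ℝ (b i) ∘L F' x)
          (integrable_left i) (integrable_right i) (integrable_mid i)
          (fun x _ => hf x) (fun x _ => (innerSL ℝ (b i)).hasFDerivAt.comp x (hF x))
    _ = -∫ x, f' x (F x) := by
        simp_rw [apply_eq_sum]
        rw [integral_finsetSum _ fun i _ => integrable_left i, Finset.sum_neg_distrib]

theorem integral_abs_integral_inner_sub_le {f g : E → E} (hf : Integrable f)
    (hg : Integrable g) :
    ∫ x, |∫ y, inner ℝ (f (x - y)) (g y)| ≤ (∫ x, ‖f x‖) * ∫ x, ‖g x‖ := by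
  let L := ContinuousLinearMap.mul ℝ ℝ
  calc ∫ x, |∫ y, inner ℝ (f (x - y)) (g y)|
      ≤ ∫ x, convolution (fun y => ‖g y‖) (fun y => ‖f y‖) L volume x := by
        refine integral_mono_of_nonneg (.of_forall fun x => abs_nonneg _)
          (hg.norm.integrable_convolution L hf.norm) ?_
        filter_upwards [hg.norm.ae_convolution_exists L hf.norm] with x hx
        rw [← norm_eq_abs]
        refine norm_integral_le_of_norm_le hx (.of_forall fun y => ?_)
        exact (norm_inner_le_norm _ _).trans_eq (mul_comm _ _)
    _ = (∫ x, ‖f x‖) * ∫ x, ‖g x‖ := by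
        rw [integral_convolution L hg.norm hf.norm, mul_comm]
        rfl

end General

section SecondMoment

variable {E : Type*} [NormedAddCommGroup E]

theorem one_add_norm_sq_le (x z : E) :
    1 + ‖x‖ ^ 2 ≤ 2 * ((1 + ‖z‖ ^ 2) * (1 + ‖x - z‖ ^ 2)) := by
  have h : ‖x‖ ≤ ‖z‖ + ‖x - z‖ := by simpa using norm_add_le z (x - z)
  have h' : ‖x‖ ^ 2 ≤ (‖z‖ + ‖x - z‖) ^ 2 := by gcongr
  nlinarith [sq_nonneg (‖z‖ - ‖x - z‖), mul_nonneg (sq_nonneg ‖z‖) (sq_nonneg ‖x - z‖)]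

variable [MeasurableSpace E] [BorelSpace E] {μ : Measure E}

theorem integrable_norm_sq_of_measure_compl_eq_zero [IsFiniteMeasure μ] {K : Set E}
    (hK : IsCompact K) (hμK : μ Kᶜ = 0) : Integrable (fun z => ‖z‖ ^ 2) μ := by
  rw [← Measure.restrict_eq_self_of_ae_mem (mem_ae_iff.2 hμK)]
  exact (Continuous.continuousOn (by fun_prop)).integrableOn_compact hK

variable [SecondCountableTopology E]

theorem integrable_norm_sub_sq [IsFiniteMeasure μ] (hμ : Integrable (fun z => ‖z‖ ^ 2) μ)
    (x : E) : Integrable (fun z => ‖x - z‖ ^ 2) μ := by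
  have hid : MemLp id 2 μ := (memLp_two_iff_integrable_sq_norm aestronglyMeasurable_id).2 hμ
  exact ((memLp_const x).sub hid).integrable_norm_pow two_ne_zero

theorem integral_norm_sub_sq_le [IsProbabilityMeasure μ] (hμ : Integrable (fun z => ‖z‖ ^ 2) μ)
    (x : E) : ∫ z, ‖x - z‖ ^ 2 ∂μ ≤ 2 * ‖x‖ ^ 2 + 2 * ∫ z, ‖z‖ ^ 2 ∂μ := by
  have h (z : E) : ‖x - z‖ ^ 2 ≤ 2 * ‖x‖ ^ 2 + 2 * ‖z‖ ^ 2 := by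
    have := pow_le_pow_left₀ (norm_nonneg _) (norm_sub_le x z) 2
    linarith [add_sq_le (a := ‖x‖) (b := ‖z‖)]
  refine (integral_mono (integrable_norm_sub_sq hμ x)
    ((integrable_const (2 * ‖x‖ ^ 2)).add (hμ.const_mul 2)) h).trans_eq ?_
  simp [integral_add (integrable_const _) (hμ.const_mul 2), integral_const_mul]

end SecondMoment

section GaussianKernel

variable {d : ℕ} {t : ℝ}

theorem gaussD_pos (ht : 0 < t) (w : EuclideanSpace ℝ (Fin d)) : 0 < gaussD d t w := by
  unfold gaussD
  positivity

@[fun_prop]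
theorem continuous_gaussD : Continuous (gaussD d t) := by
  unfold gaussD
  fun_prop

theorem integral_gaussD (ht : 0 < t) : ∫ x, gaussD d t x = 1 := by
  have gaussD_eq (x : EuclideanSpace ℝ (Fin d)) : gaussD d t x =
      (2 * π * t) ^ (-(d : ℝ) / 2) * exp (-(1 / (2 * t)) * ‖x‖ ^ 2) := by
    rw [gaussD]
    congr 2
    ring
  have hb : 0 < 1 / (2 * t) := by positivity
  simp_rw [gaussD_eq]
  rw [integral_const_mul, GaussianFourier.integral_rexp_neg_mul_sq_norm hb,
    finrank_euclideanSpace_fin, show π / (1 / (2 * t)) = 2 * π * t by field_simp,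
    ← rpow_add (by positivity), neg_div, neg_add_cancel, rpow_zero]

theorem integrable_gaussD (ht : 0 < t) : Integrable (gaussD d t) :=
  .of_integral_ne_zero (by simp [integral_gaussD ht])

theorem hasDerivAt_gaussD (ht : 0 < t) (w : EuclideanSpace ℝ (Fin d)) :
    HasDerivAt (fun s => gaussD d s w)
      (gaussD d t w * (‖w‖ ^ 2 / (2 * t ^ 2) - d / (2 * t))) t := by
  have linear : HasDerivAt (fun s : ℝ => 2 * π * s) (2 * π) t := by
    simpa using (hasDerivAt_id t).const_mul (2 * π)
  have prefactor := linear.rpow_const (p := -(d : ℝ) / 2) (.inl (by positivity))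
  have exponent : HasDerivAt (fun s : ℝ => -‖w‖ ^ 2 / (2 * s)) (‖w‖ ^ 2 / (2 * t ^ 2)) t := by
    refine (((hasDerivAt_id t).const_mul 2).fun_inv (by simpa using ht.ne')
      |>.const_mul (-‖w‖ ^ 2)).congr_deriv ?_
    simp only [id]
    field_simp
  refine (prefactor.mul exponent.exp).congr_deriv ?_
  rw [gaussD, rpow_sub_one (by positivity)]
  field_simp
  ring

theorem gaussDy_eq (ht : 0 < t) (w : EuclideanSpace ℝ (Fin d)) :
    gaussDy d t w = gaussD d t w * (‖w‖ ^ 2 / (2 * t ^ 2) - d / (2 * t)) :=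
  (hasDerivAt_gaussD ht w).deriv

/-- The spatial gradient of `gaussD d t`. -/
noncomputable def gaussGrad (d : ℕ) (t : ℝ) (w : EuclideanSpace ℝ (Fin d)) :
    EuclideanSpace ℝ (Fin d) :=
  -(gaussD d t w / t) • w

/-- The spatial Hessian of `gaussD d t`, as the derivative of `gaussGrad d t`. -/
noncomputable def gaussHess (d : ℕ) (t : ℝ) (w : EuclideanSpace ℝ (Fin d)) :
    EuclideanSpace ℝ (Fin d) →L[ℝ] EuclideanSpace ℝ (Fin d) :=
  gaussD d t w • ((t ^ 2)⁻¹ • rankOne ℝ w w - t⁻¹ • .id ℝ _)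

theorem hasFDerivAt_gaussD (w : EuclideanSpace ℝ (Fin d)) :
    HasFDerivAt (gaussD d t) (innerSL ℝ (gaussGrad d t w)) w := by
  have h := ((hasStrictFDerivAt_norm_sq w).hasFDerivAt.neg.mul_const (2 * t)⁻¹).exp.const_mul
    ((2 * π * t) ^ (-(d : ℝ) / 2))
  refine h.congr_fderiv ?_
  ext v
  simp only [gaussGrad, gaussD, Pi.neg_apply, neg_apply, smul_apply, coe_innerSL_apply,
    nsmul_eq_mul, Nat.cast_ofNat, smul_eq_mul, neg_smul, map_neg, map_smul]
  ring_nf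

theorem hasFDerivAt_gaussGrad (w : EuclideanSpace ℝ (Fin d)) :
    HasFDerivAt (gaussGrad d t) (gaussHess d t w) w := by
  refine (((hasFDerivAt_gaussD w).mul_const t⁻¹).neg.smul (hasFDerivAt_id w)).congr_fderiv ?_
  ext v
  simp only [gaussGrad, gaussHess, Pi.neg_apply, add_apply, sub_apply, neg_apply, smul_apply,
    id_eq, ContinuousLinearMap.id_apply, ContinuousLinearMap.smulRight_apply, coe_innerSL_apply,
    rankOne_apply, PiLp.add_apply, PiLp.sub_apply, PiLp.neg_apply, PiLp.smul_apply, neg_smul,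
    map_neg, map_smul, smul_eq_mul]
  ring_nf

theorem trace_gaussHess (ht : 0 < t) (w : EuclideanSpace ℝ (Fin d)) :
    LinearMap.trace ℝ (EuclideanSpace ℝ (Fin d)) (gaussHess d t w) = 2 * gaussDy d t w := by
  simp only [gaussHess, ContinuousLinearMap.toLinearMap_smul,
    ContinuousLinearMap.toLinearMap_sub, ContinuousLinearMap.coe_id, map_smul, map_sub,
    trace_rankOne, LinearMap.trace_id, finrank_euclideanSpace_fin, real_inner_self_eq_norm_sq,
    gaussDy_eq ht, smul_eq_mul]
  field_simp

theorem gaussD_mul_gaussD {u v : ℝ} (hu : 0 < u) (hv : 0 < v)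
    (w h : EuclideanSpace ℝ (Fin d)) :
    gaussD d v ((v / (u + v)) • w + h) * gaussD d u (w - ((v / (u + v)) • w + h)) =
      gaussD d (u + v) w * gaussD d (u * v / (u + v)) h := by
  have prefactors : (2 * π * v) ^ (-(d : ℝ) / 2) * (2 * π * u) ^ (-(d : ℝ) / 2) =
      (2 * π * (u + v)) ^ (-(d : ℝ) / 2) * (2 * π * (u * v / (u + v))) ^ (-(d : ℝ) / 2) := by
    rw [← mul_rpow (by positivity) (by positivity), ← mul_rpow (by positivity) (by positivity)]
    congr 1
    field_simp
  have complement : w - ((v / (u + v)) • w + h) = (u / (u + v)) • w - h := by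
    match_scalars <;> field_simp
    ring
  simp only [complement, gaussD]
  rw [mul_mul_mul_comm, prefactors, mul_mul_mul_comm _ (exp _) _ (exp (-‖h‖ ^ 2 / _)), ← exp_add,
    ← exp_add]
  congr 2
  rw [norm_sub_sq_real, norm_add_sq_real]
  simp only [norm_smul, mul_pow, norm_eq_abs, sq_abs, real_inner_smul_left]
  field_simp
  ring

theorem integral_gaussD_mul_gaussD_sub {u v : ℝ} (hu : 0 < u) (hv : 0 < v)
    (w : EuclideanSpace ℝ (Fin d)) :
    ∫ y, gaussD d v y * gaussD d u (w - y) = gaussD d (u + v) w := by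
  rw [← integral_add_left_eq_self _ ((v / (u + v)) • w)]
  simp_rw [gaussD_mul_gaussD hu hv]
  rw [integral_const_mul, integral_gaussD (by positivity), mul_one]

end GaussianKernel

section GaussianDecay

variable {d : ℕ}

theorem gaussD_le_rpow {t : ℝ} (ht : 0 < t) (w : EuclideanSpace ℝ (Fin d)) :
    gaussD d t w ≤ (2 * π * t) ^ (-(d : ℝ) / 2) := by
  have exponent : -‖w‖ ^ 2 / (2 * t) ≤ 0 := by
    rw [neg_div, neg_nonpos]
    positivity
  exact mul_le_of_le_one_right (by positivity) (exp_le_one_iff.2 exponent)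

theorem exists_one_add_norm_sq_mul_gaussD_le {a b : ℝ} (ha : 0 < a) :
    ∃ C, 0 ≤ C ∧ ∀ s ∈ Icc a b, ∀ w : EuclideanSpace ℝ (Fin d),
      (1 + ‖w‖ ^ 2) * gaussD d s w ≤ C * gaussD d (2 * b) w := by
  rcases lt_or_ge b a with hab | hab
  · exact ⟨0, le_rfl, fun s hs => absurd (hs.1.trans hs.2) hab.not_ge⟩
  have hb : 0 < b := ha.trans_le hab
  refine ⟨(1 + 4 * b) * ((2 * π * a) ^ (-(d : ℝ) / 2) / (2 * π * (2 * b)) ^ (-(d : ℝ) / 2)),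
    by positivity, fun s hs w => ?_⟩
  have weight : 1 + ‖w‖ ^ 2 ≤ (1 + 4 * b) * exp (‖w‖ ^ 2 / (4 * b)) := by
    have h := add_one_le_exp (‖w‖ ^ 2 / (4 * b))
    calc 1 + ‖w‖ ^ 2 ≤ (1 + 4 * b) * (‖w‖ ^ 2 / (4 * b) + 1) := by
          field_simp
          nlinarith [sq_nonneg ‖w‖]
      _ ≤ _ := by gcongr
  have prefactor : (2 * π * s) ^ (-(d : ℝ) / 2) ≤ (2 * π * a) ^ (-(d : ℝ) / 2) := by
    refine rpow_le_rpow_of_nonpos (by positivity) (by gcongr; exact hs.1) ?_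
    rw [neg_div, neg_nonpos]
    positivity
  have hs₀ : 0 < s := ha.trans_le hs.1
  have exponent : -‖w‖ ^ 2 / (2 * s) ≤ -‖w‖ ^ 2 / (2 * b) := by
    rw [neg_div, neg_div, neg_le_neg_iff]
    gcongr
    exact hs.2
  calc (1 + ‖w‖ ^ 2) * gaussD d s w
      ≤ ((1 + 4 * b) * exp (‖w‖ ^ 2 / (4 * b))) *
          ((2 * π * a) ^ (-(d : ℝ) / 2) * exp (-‖w‖ ^ 2 / (2 * b))) := by
        rw [gaussD]
        gcongr
    _ = (1 + 4 * b) * (2 * π * a) ^ (-(d : ℝ) / 2) * exp (-‖w‖ ^ 2 / (2 * (2 * b))) := by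
        rw [mul_mul_mul_comm, ← exp_add]
        congr 2
        field_simp
        ring
    _ = _ := by
        rw [gaussD]
        field_simp

/-- Continuous kernels dominated by a multiple of some Gaussian density. The Gaussian density and
its derivatives all have this property. -/
structure HasGaussianDecay {V : Type*} [NormedAddCommGroup V]
    (k : EuclideanSpace ℝ (Fin d) → V) : Prop where
  continuous : Continuous k
  exists_norm_le : ∃ C t, 0 ≤ C ∧ 0 < t ∧ ∀ w, ‖k w‖ ≤ C * gaussD d t w

namespace HasGaussianDecay

variable {V W : Type*} [NormedAddCommGroup V] [NormedAddCommGroup W]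
  {k : EuclideanSpace ℝ (Fin d) → V} {l : EuclideanSpace ℝ (Fin d) → W}

theorem exists_norm_le_const (hk : HasGaussianDecay k) : ∃ C, ∀ w, ‖k w‖ ≤ C := by
  obtain ⟨C, t, hC, ht, hkC⟩ := hk.exists_norm_le
  exact ⟨C * (2 * π * t) ^ (-(d : ℝ) / 2), fun w =>
    (hkC w).trans (mul_le_mul_of_nonneg_left (gaussD_le_rpow ht w) hC)⟩

theorem integrable (hk : HasGaussianDecay k) : Integrable k := by
  obtain ⟨C, t, -, ht, hkC⟩ := hk.exists_norm_le
  exact ((integrable_gaussD ht).const_mul C).mono' hk.continuous.aestronglyMeasurable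
    (.of_forall hkC)

theorem integrable_comp_sub {m : Measure (EuclideanSpace ℝ (Fin d))} [IsFiniteMeasure m]
    (hk : HasGaussianDecay k) (x : EuclideanSpace ℝ (Fin d)) :
    Integrable (fun z => k (x - z)) m := by
  obtain ⟨C, hC⟩ := hk.exists_norm_le_const
  have hcont := hk.continuous
  exact .of_bound (by fun_prop) C (.of_forall fun z => hC _)

theorem of_norm_le (hk : HasGaussianDecay k) (hl : Continuous l) {A : ℝ} (hA : 0 ≤ A)
    (hlk : ∀ w, ‖l w‖ ≤ A * ((1 + ‖w‖ ^ 2) * ‖k w‖)) : HasGaussianDecay l := by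
  obtain ⟨C, t, hC, ht, hkC⟩ := hk.exists_norm_le
  obtain ⟨D, hD, hDC⟩ := exists_one_add_norm_sq_mul_gaussD_le (d := d) (b := t) ht
  refine ⟨hl, A * C * D, 2 * t, by positivity, by positivity, fun w => ?_⟩
  calc ‖l w‖ ≤ A * ((1 + ‖w‖ ^ 2) * ‖k w‖) := hlk w
    _ ≤ A * ((1 + ‖w‖ ^ 2) * (C * gaussD d t w)) := by gcongr; exact hkC w
    _ = A * C * ((1 + ‖w‖ ^ 2) * gaussD d t w) := by ring
    _ ≤ A * C * (D * gaussD d (2 * t) w) := by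
        exact mul_le_mul_of_nonneg_left (hDC t (left_mem_Icc.2 le_rfl) w) (by positivity)
    _ = A * C * D * gaussD d (2 * t) w := by ring

theorem one_add_norm_sq_smul [NormedSpace ℝ V] (hk : HasGaussianDecay k) :
    HasGaussianDecay fun w => (1 + ‖w‖ ^ 2) • k w := by
  have hcont := hk.continuous
  refine hk.of_norm_le (by fun_prop) zero_le_one fun w => ?_
  rw [norm_smul, norm_of_nonneg (by positivity), one_mul]

end HasGaussianDecay

variable {t : ℝ}

theorem hasGaussianDecay_gaussD (ht : 0 < t) : HasGaussianDecay (gaussD d t) :=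
  ⟨continuous_gaussD, 1, t, zero_le_one, ht, fun w => by
    rw [norm_of_nonneg (gaussD_pos ht w).le, one_mul]⟩

theorem hasGaussianDecay_gaussGrad (ht : 0 < t) : HasGaussianDecay (gaussGrad d t) := by
  refine (hasGaussianDecay_gaussD ht).of_norm_le (A := t⁻¹) ?_ (by positivity) fun w => ?_
  · exact continuous_iff_continuousAt.2 fun w => (hasFDerivAt_gaussGrad w).continuousAt
  · have hw : ‖w‖ ≤ 1 + ‖w‖ ^ 2 := by nlinarith [sq_nonneg (‖w‖ - 1)]
    calc ‖gaussGrad d t w‖ = t⁻¹ * (‖w‖ * ‖gaussD d t w‖) := by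
          rw [gaussGrad, norm_smul, norm_neg, norm_div, norm_of_nonneg ht.le]
          ring
      _ ≤ _ := by gcongr

theorem hasGaussianDecay_gaussHess (ht : 0 < t) : HasGaussianDecay (gaussHess d t) := by
  refine (hasGaussianDecay_gaussD ht).of_norm_le (A := (t ^ 2)⁻¹ + t⁻¹) ?_ (by positivity)
    fun w => ?_
  · have hrank : Continuous fun w : EuclideanSpace ℝ (Fin d) => rankOne ℝ w w :=
      (rankOne ℝ).continuous.clm_apply continuous_id
    unfold gaussHess
    fun_prop
  · have hw : ‖rankOne ℝ w w‖ ≤ 1 + ‖w‖ ^ 2 := by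
      rw [norm_rankOne]
      linarith [sq ‖w‖]
    have hid : ‖ContinuousLinearMap.id ℝ (EuclideanSpace ℝ (Fin d))‖ ≤ 1 + ‖w‖ ^ 2 :=
      ContinuousLinearMap.norm_id_le.trans (by linarith [sq_nonneg ‖w‖])
    calc ‖gaussHess d t w‖
        ≤ ‖gaussD d t w‖ * ((t ^ 2)⁻¹ * (1 + ‖w‖ ^ 2) + t⁻¹ * (1 + ‖w‖ ^ 2)) := by
          rw [gaussHess, norm_smul]
          gcongr
          refine (norm_sub_le _ _).trans ?_
          rw [norm_smul, norm_smul, norm_of_nonneg (by positivity), norm_of_nonneg (by positivity)]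
          gcongr
      _ = _ := by ring

theorem hasGaussianDecay_norm_gaussGrad_sq_div (ht : 0 < t) :
    HasGaussianDecay fun w => ‖gaussGrad d t w‖ ^ 2 / gaussD d t w := by
  have hcont := (hasGaussianDecay_gaussGrad (d := d) ht).continuous
  have hpos := gaussD_pos (d := d) ht
  refine (hasGaussianDecay_gaussD ht).of_norm_le (A := (t ^ 2)⁻¹)
    ((hcont.norm.pow 2).div continuous_gaussD fun w => (hpos w).ne') (by positivity) fun w => ?_
  calc ‖‖gaussGrad d t w‖ ^ 2 / gaussD d t w‖ = (t ^ 2)⁻¹ * (‖w‖ ^ 2 * ‖gaussD d t w‖) := by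
        have := hpos w
        rw [norm_of_nonneg (by positivity), gaussGrad, norm_smul, norm_neg, norm_div,
          norm_of_nonneg ht.le, norm_of_nonneg this.le]
        field_simp
    _ ≤ _ := by
        gcongr
        linarith

theorem exists_abs_gaussDy_le {a b : ℝ} (ha : 0 < a) :
    ∃ C, 0 ≤ C ∧ ∀ s ∈ Icc a b, ∀ w : EuclideanSpace ℝ (Fin d),
      |gaussDy d s w| ≤ C * gaussD d (2 * b) w := by
  obtain ⟨C, hC, hgauss⟩ := exists_one_add_norm_sq_mul_gaussD_le (d := d) (b := b) ha
  refine ⟨(1 / (2 * a ^ 2) + d / (2 * a)) * C, by positivity, fun s hs w => ?_⟩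
  have hs₀ : 0 < s := ha.trans_le hs.1
  have hpos := (gaussD_pos hs₀ w).le
  have factor : |‖w‖ ^ 2 / (2 * s ^ 2) - d / (2 * s)| ≤
      (1 / (2 * a ^ 2) + d / (2 * a)) * (1 + ‖w‖ ^ 2) := by
    have quadratic : ‖w‖ ^ 2 / (2 * s ^ 2) ≤ 1 / (2 * a ^ 2) * ‖w‖ ^ 2 := by
      rw [div_mul_eq_mul_div, one_mul]
      gcongr
      exact hs.1
    have constant : d / (2 * s) ≤ d / (2 * a) := by
      gcongr
      exact hs.1
    have : 0 ≤ d / (2 * a) * ‖w‖ ^ 2 := by positivity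
    have : 0 ≤ 1 / (2 * a ^ 2) := by positivity
    refine (abs_sub _ _).trans ?_
    rw [abs_of_nonneg (by positivity), abs_of_nonneg (by positivity)]
    linarith
  calc |gaussDy d s w| = gaussD d s w * |‖w‖ ^ 2 / (2 * s ^ 2) - d / (2 * s)| := by
        rw [gaussDy_eq hs₀, abs_mul, abs_of_nonneg hpos]
    _ ≤ gaussD d s w * ((1 / (2 * a ^ 2) + d / (2 * a)) * (1 + ‖w‖ ^ 2)) := by gcongr
    _ = (1 / (2 * a ^ 2) + d / (2 * a)) * ((1 + ‖w‖ ^ 2) * gaussD d s w) := by ring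
    _ ≤ (1 / (2 * a ^ 2) + d / (2 * a)) * (C * gaussD d (2 * b) w) := by
        exact mul_le_mul_of_nonneg_left (hgauss s hs w) (by positivity)
    _ = _ := by ring

theorem hasGaussianDecay_gaussDy (ht : 0 < t) : HasGaussianDecay (gaussDy d t) := by
  obtain ⟨C, hC, hgauss⟩ := exists_abs_gaussDy_le (d := d) (b := t) ht
  refine ⟨?_, C, 2 * t, hC, by positivity, hgauss t (left_mem_Icc.2 le_rfl)⟩
  rw [funext (gaussDy_eq ht)]
  fun_prop

end GaussianDecay

section Smoothing

variable {V : Type*} [NormedAddCommGroup V] [NormedSpace ℝ V]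

/-- The convolution `μ * k` of a measure with a kernel; for `k = gaussD d t` it is the density of
`μ * n_t`. -/
noncomputable def smoothing {G : Type*} [Sub G] [MeasurableSpace G] (μ : Measure G) (k : G → V)
    (x : G) : V :=
  ∫ z, k (x - z) ∂μ

section InvariantMeasure

variable {G : Type*} [AddGroup G] [MeasurableSpace G] [MeasurableAdd₂ G] [MeasurableNeg G]
  {m μ : Measure G} [SFinite m] [m.IsAddRightInvariant] {k : G → V}

theorem integrable_smoothing [IsFiniteMeasure μ] (hk : Integrable k m) :
    Integrable (smoothing μ k) m := by
  have hprod := Integrable.convolution_integrand (.lsmul ℝ ℝ)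
    (integrable_const (μ := μ) (1 : ℝ)) hk
  unfold smoothing
  simpa only [ContinuousLinearMap.lsmul_apply, one_smul] using hprod.integral_prod_left

theorem integral_smoothing [CompleteSpace V] [IsProbabilityMeasure μ] (hk : Integrable k m) :
    ∫ x, smoothing μ k x ∂m = ∫ x, k x ∂m := by
  have h := integral_convolution (.lsmul ℝ ℝ) (integrable_const (μ := μ) (1 : ℝ)) hk
  simpa [convolution, smoothing] using h

end InvariantMeasure

variable {d : ℕ} {μ : Measure (EuclideanSpace ℝ (Fin d))} {k : EuclideanSpace ℝ (Fin d) → V}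

theorem HasGaussianDecay.integrable_one_add_norm_sq_smul_smoothing [IsFiniteMeasure μ]
    (hk : HasGaussianDecay k) (hμ : Integrable (fun z => ‖z‖ ^ 2) μ) :
    Integrable fun x => (1 + ‖x‖ ^ 2) • smoothing μ k x := by
  have hcont := hk.continuous
  have hprod := Integrable.convolution_integrand (.lsmul ℝ ℝ)
    ((integrable_const (1 : ℝ)).add hμ) hk.one_add_norm_sq_smul.integrable
  have hweighted : Integrable (fun p : _ × EuclideanSpace ℝ (Fin d) =>
      (1 + ‖p.1‖ ^ 2) • k (p.1 - p.2)) (volume.prod μ) := by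
    refine (hprod.norm.const_mul 2).mono' (by fun_prop) (.of_forall fun p => ?_)
    simp only [ContinuousLinearMap.lsmul_apply, Pi.add_apply, norm_smul, ← mul_assoc]
    gcongr
    have := one_add_norm_sq_le p.1 p.2
    rw [norm_of_nonneg (by positivity), norm_of_nonneg (by positivity),
      norm_of_nonneg (by positivity)]
    linarith
  unfold smoothing
  simpa only [integral_smul] using hweighted.integral_prod_left

theorem HasGaussianDecay.integrable_smul_smoothing [IsFiniteMeasure μ] (hk : HasGaussianDecay k)
    (hμ : Integrable (fun z => ‖z‖ ^ 2) μ) {f : EuclideanSpace ℝ (Fin d) → ℝ}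
    (hf : AEStronglyMeasurable f) {A : ℝ} (hfA : ∀ x, |f x| ≤ A * (1 + ‖x‖ ^ 2)) :
    Integrable fun x => f x • smoothing μ k x := by
  refine ((hk.integrable_one_add_norm_sq_smul_smoothing hμ).norm.const_mul A).mono'
    (hf.smul (integrable_smoothing hk.integrable).aestronglyMeasurable) (.of_forall fun x => ?_)
  rw [norm_smul, norm_smul, ← mul_assoc, norm_of_nonneg (r := 1 + ‖x‖ ^ 2) (by positivity)]
  gcongr
  exact hfA x

theorem HasGaussianDecay.hasFDerivAt_smoothing [IsFiniteMeasure μ]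
    {k' : EuclideanSpace ℝ (Fin d) → EuclideanSpace ℝ (Fin d) →L[ℝ] V}
    (hk : HasGaussianDecay k) (hk' : HasGaussianDecay k')
    (hderiv : ∀ w, HasFDerivAt k (k' w) w) (x : EuclideanSpace ℝ (Fin d)) :
    HasFDerivAt (smoothing μ k) (smoothing μ k' x) x := by
  obtain ⟨C, hC⟩ := hk'.exists_norm_le_const
  refine hasFDerivAt_integral_of_dominated_of_fderiv_le (bound := fun _ => C)
    (F' := fun y z => k' (y - z)) Filter.univ_mem
    (.of_forall fun y => (hk.integrable_comp_sub y).aestronglyMeasurable)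
    (hk.integrable_comp_sub x) (hk'.integrable_comp_sub x).aestronglyMeasurable
    (.of_forall fun z y _ => hC _) (integrable_const C) (.of_forall fun z y _ => ?_)
  exact (hasFDerivAt_comp_sub z).2 (hderiv (y - z))

theorem hasDerivAt_integral_mul_gaussD {m : Measure (EuclideanSpace ℝ (Fin d))}
    {g : EuclideanSpace ℝ (Fin d) → ℝ} (hg : Integrable g m) {t : ℝ} (ht : 0 < t)
    (x : EuclideanSpace ℝ (Fin d)) :
    HasDerivAt (fun s => ∫ z, g z * gaussD d s (x - z) ∂m)
      (∫ z, g z * gaussDy d t (x - z) ∂m) t := by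
  obtain ⟨C, hC, hgauss⟩ := exists_abs_gaussDy_le (d := d) (b := 2 * t) (half_pos ht)
  have hnhds : Icc (t / 2) (2 * t) ∈ 𝓝 t := Icc_mem_nhds (half_lt_self ht) (by linarith)
  have hcont := (hasGaussianDecay_gaussDy (d := d) ht).continuous
  refine (hasDerivAt_integral_of_dominated_loc_of_deriv_le
    (F' := fun s z => g z * gaussDy d s (x - z))
    (bound := fun z => ‖g z‖ * (C * (2 * π * (2 * (2 * t))) ^ (-(d : ℝ) / 2)))
    hnhds (.of_forall fun s => ?_) ?_ ?_ ?_ ?_ ?_).2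
  · exact hg.aestronglyMeasurable.mul (by fun_prop)
  · refine hg.mul_bdd (c := (2 * π * t) ^ (-(d : ℝ) / 2)) (by fun_prop) (.of_forall fun z => ?_)
    rw [norm_of_nonneg (gaussD_pos ht _).le]
    exact gaussD_le_rpow ht _
  · exact hg.aestronglyMeasurable.mul (by fun_prop)
  · refine .of_forall fun z s hs => ?_
    rw [norm_mul]
    gcongr
    exact (hgauss s hs _).trans (by gcongr; exact gaussD_le_rpow (by positivity) _)
  · exact hg.norm.mul_const _
  · refine .of_forall fun z s hs => ?_
    have hs₀ := (half_pos ht).trans_le hs.1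
    exact (hasDerivAt_gaussD hs₀ _).differentiableAt.hasDerivAt.const_mul _

variable [IsFiniteMeasure μ] {t : ℝ}

theorem hasDerivAt_smoothing_gaussD (ht : 0 < t) (x : EuclideanSpace ℝ (Fin d)) :
    HasDerivAt (fun s => smoothing μ (gaussD d s) x) (smoothing μ (gaussDy d t) x) t := by
  unfold smoothing
  simpa only [one_mul] using hasDerivAt_integral_mul_gaussD (integrable_const (1 : ℝ)) ht x

theorem hasFDerivAt_smoothing_gaussD (ht : 0 < t) (x : EuclideanSpace ℝ (Fin d)) :
    HasFDerivAt (smoothing μ (gaussD d t)) (innerSL ℝ (smoothing μ (gaussGrad d t) x)) x := by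
  have hgrad : HasGaussianDecay fun w => innerSL ℝ (gaussGrad d t w) := by
    have hk := hasGaussianDecay_gaussGrad (d := d) ht
    refine hk.of_norm_le ((innerSL ℝ).continuous.comp hk.continuous) zero_le_one fun w => ?_
    rw [innerSL_apply_norm, one_mul]
    exact le_mul_of_one_le_left (norm_nonneg _) (by linarith [sq_nonneg ‖w‖])
  refine ((hasGaussianDecay_gaussD ht).hasFDerivAt_smoothing hgrad hasFDerivAt_gaussD x
    ).congr_fderiv ?_
  exact (innerSL ℝ).integral_comp_comm ((hasGaussianDecay_gaussGrad ht).integrable_comp_sub x)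

theorem continuous_smoothing_gaussD (ht : 0 < t) : Continuous (smoothing μ (gaussD d t)) :=
  continuous_iff_continuousAt.2 fun x => (hasFDerivAt_smoothing_gaussD ht x).continuousAt

theorem hasFDerivAt_smoothing_gaussGrad (ht : 0 < t) (x : EuclideanSpace ℝ (Fin d)) :
    HasFDerivAt (smoothing μ (gaussGrad d t)) (smoothing μ (gaussHess d t) x) x :=
  (hasGaussianDecay_gaussGrad ht).hasFDerivAt_smoothing (hasGaussianDecay_gaussHess ht)
    hasFDerivAt_gaussGrad x

theorem continuous_smoothing_gaussGrad (ht : 0 < t) : Continuous (smoothing μ (gaussGrad d t)) :=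
  continuous_iff_continuousAt.2 fun x => (hasFDerivAt_smoothing_gaussGrad ht x).continuousAt

theorem trace_smoothing_gaussHess (ht : 0 < t) (x : EuclideanSpace ℝ (Fin d)) :
    LinearMap.trace ℝ (EuclideanSpace ℝ (Fin d)) (smoothing μ (gaussHess d t) x :) =
      2 * smoothing μ (gaussDy d t) x := by
  let tr : (EuclideanSpace ℝ (Fin d) →L[ℝ] EuclideanSpace ℝ (Fin d)) →L[ℝ] ℝ :=
    LinearMap.toContinuousLinearMap
      (LinearMap.trace ℝ (EuclideanSpace ℝ (Fin d)) ∘ₗ ContinuousLinearMap.coeLM ℝ)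
  calc tr (smoothing μ (gaussHess d t) x) = ∫ z, tr (gaussHess d t (x - z)) ∂μ :=
        (tr.integral_comp_comm ((hasGaussianDecay_gaussHess ht).integrable_comp_sub x)).symm
    _ = ∫ z, 2 * gaussDy d t (x - z) ∂μ := by
        congr with z
        exact trace_gaussHess ht (x - z)
    _ = 2 * smoothing μ (gaussDy d t) x := integral_const_mul _ _

theorem exists_abs_smoothing_gaussDy_le {a b : ℝ} (ha : 0 < a) (hb : 0 < b) :
    ∃ C, 0 ≤ C ∧ ∀ s ∈ Icc a b, ∀ x,
      |smoothing μ (gaussDy d s) x| ≤ C * smoothing μ (gaussD d (2 * b)) x := by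
  obtain ⟨C, hC, hgauss⟩ := exists_abs_gaussDy_le (d := d) (b := b) ha
  refine ⟨C, hC, fun s hs x => ?_⟩
  rw [smoothing, smoothing, ← integral_const_mul, ← norm_eq_abs]
  exact norm_integral_le_of_norm_le (((hasGaussianDecay_gaussD
    (by positivity)).integrable_comp_sub x).const_mul C) (.of_forall fun z => hgauss s hs _)

variable [NeZero μ]

theorem smoothing_gaussD_pos (ht : 0 < t) (x : EuclideanSpace ℝ (Fin d)) :
    0 < smoothing μ (gaussD d t) x := by
  have hsupp : Function.support (fun z => gaussD d t (x - z)) = univ :=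
    eq_univ_of_forall fun z => (gaussD_pos ht (x - z)).ne'
  rw [smoothing, integral_pos_iff_support_of_nonneg (fun z => (gaussD_pos ht (x - z)).le)
    ((hasGaussianDecay_gaussD ht).integrable_comp_sub x), hsupp]
  simp [NeZero.ne μ]

theorem continuous_log_smoothing_gaussD (ht : 0 < t) :
    Continuous fun x => log (smoothing μ (gaussD d t) x) :=
  (continuous_smoothing_gaussD ht).log fun x => (smoothing_gaussD_pos ht x).ne'

end Smoothing

section FisherInformation

variable {d : ℕ} {μ : Measure (EuclideanSpace ℝ (Fin d))} {t : ℝ}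

/-- The Fisher information `∫ |∇p|² / p` of the density `p` of `μ * n_t`. -/
noncomputable def fisherInfo (μ : Measure (EuclideanSpace ℝ (Fin d))) (t : ℝ) : ℝ :=
  ∫ x, ‖smoothing μ (gaussGrad d t) x‖ ^ 2 / smoothing μ (gaussD d t) x

theorem norm_sq_smoothing_gaussGrad_div_le [IsFiniteMeasure μ] [NeZero μ] (ht : 0 < t)
    (x : EuclideanSpace ℝ (Fin d)) :
    ‖smoothing μ (gaussGrad d t) x‖ ^ 2 / smoothing μ (gaussD d t) x ≤
      smoothing μ (fun w => ‖gaussGrad d t w‖ ^ 2 / gaussD d t w) x := by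
  rw [div_le_iff₀' (smoothing_gaussD_pos (μ := μ) ht x)]
  calc ‖smoothing μ (gaussGrad d t) x‖ ^ 2 ≤ (∫ z, ‖gaussGrad d t (x - z)‖ ∂μ) ^ 2 := by
        gcongr
        exact norm_integral_le_integral_norm _
    _ ≤ _ := sq_integral_le_integral_mul_integral_sq_div (fun z => gaussD_pos ht _)
        ((hasGaussianDecay_gaussGrad ht).integrable_comp_sub x).norm
        ((hasGaussianDecay_gaussD ht).integrable_comp_sub x)
        ((hasGaussianDecay_norm_gaussGrad_sq_div ht).integrable_comp_sub x)

theorem integrable_norm_sq_smoothing_gaussGrad_div [IsFiniteMeasure μ] [NeZero μ]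
    (ht : 0 < t) : Integrable fun x =>
      ‖smoothing μ (gaussGrad d t) x‖ ^ 2 / smoothing μ (gaussD d t) x := by
  have hcont : Continuous fun x => ‖smoothing μ (gaussGrad d t) x‖ ^ 2 /
      smoothing μ (gaussD d t) x :=
    ((continuous_smoothing_gaussGrad ht).norm.pow 2).div (continuous_smoothing_gaussD ht)
      fun x => (smoothing_gaussD_pos ht x).ne'
  have hmajorant := integrable_smoothing (μ := μ)
    (hasGaussianDecay_norm_gaussGrad_sq_div (d := d) ht).integrable
  refine hmajorant.mono' hcont.aestronglyMeasurable (.of_forall fun x => ?_)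
  have := smoothing_gaussD_pos (μ := μ) ht x
  rw [norm_of_nonneg (by positivity)]
  exact norm_sq_smoothing_gaussGrad_div_le ht x

theorem sq_integral_norm_smoothing_gaussGrad_le_fisherInfo
    [IsProbabilityMeasure μ] (ht : 0 < t) :
    (∫ x, ‖smoothing μ (gaussGrad d t) x‖) ^ 2 ≤ fisherInfo μ t := by
  calc _ ≤ (∫ x, smoothing μ (gaussD d t) x) * fisherInfo μ t :=
        sq_integral_le_integral_mul_integral_sq_div (smoothing_gaussD_pos ht)
          (integrable_smoothing (hasGaussianDecay_gaussGrad ht).integrable).norm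
          (integrable_smoothing (integrable_gaussD ht))
          (integrable_norm_sq_smoothing_gaussGrad_div ht)
    _ = fisherInfo μ t := by
        rw [integral_smoothing (integrable_gaussD ht), integral_gaussD ht, one_mul]

end FisherInformation

section Entropy

variable {d : ℕ} {μ : Measure (EuclideanSpace ℝ (Fin d))} [IsProbabilityMeasure μ] {t : ℝ}

theorem smoothing_gaussD_le_rpow (ht : 0 < t) (x : EuclideanSpace ℝ (Fin d)) :
    smoothing μ (gaussD d t) x ≤ (2 * π * t) ^ (-(d : ℝ) / 2) := by
  simpa [smoothing] using integral_mono ((hasGaussianDecay_gaussD ht).integrable_comp_sub x)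
    (integrable_const (μ := μ) _) fun z => gaussD_le_rpow ht (x - z)

theorem log_gaussD (ht : 0 < t) (w : EuclideanSpace ℝ (Fin d)) :
    log (gaussD d t w) = -(d : ℝ) / 2 * log (2 * π * t) - ‖w‖ ^ 2 / (2 * t) := by
  rw [gaussD, log_mul (by positivity) (exp_ne_zero _), log_rpow (by positivity), log_exp]
  ring

theorem le_log_smoothing_gaussD (hμ : Integrable (fun z => ‖z‖ ^ 2) μ) (ht : 0 < t)
    (x : EuclideanSpace ℝ (Fin d)) :
    -(d : ℝ) / 2 * log (2 * π * t) - (∫ z, ‖x - z‖ ^ 2 ∂μ) / (2 * t) ≤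
      log (smoothing μ (gaussD d t) x) := by
  have hsq := (integrable_norm_sub_sq hμ x).div_const (2 * t)
  have hlog : Integrable (fun z => log (gaussD d t (x - z))) μ := by
    simp_rw [log_gaussD ht]
    exact (integrable_const _).sub hsq
  calc _ = ∫ z, log (gaussD d t (x - z)) ∂μ := by
        simp_rw [log_gaussD ht]
        rw [integral_sub (integrable_const _) hsq, integral_div]
        simp
    _ ≤ _ := integral_log_le_log_integral (fun z => gaussD_pos ht _)
        ((hasGaussianDecay_gaussD ht).integrable_comp_sub x) hlog

theorem exists_abs_log_smoothing_gaussD_le (hμ : Integrable (fun z => ‖z‖ ^ 2) μ) {a b : ℝ}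
    (ha : 0 < a) : ∃ C, 0 ≤ C ∧ ∀ s ∈ Icc a b, ∀ x,
      |log (smoothing μ (gaussD d s) x)| ≤ C * (1 + ‖x‖ ^ 2) := by
  set M := ∫ z, ‖z‖ ^ 2 ∂μ
  set A := d / 2 * (|log (2 * π * a)| + |log (2 * π * b)|)
  have : 0 ≤ M := integral_nonneg fun z => by positivity
  have : 0 ≤ A := by positivity
  refine ⟨A + (M + 1) / a, by positivity, fun s hs x => ?_⟩
  have hs₀ : 0 < s := ha.trans_le hs.1
  have prefactor : |-(d : ℝ) / 2 * log (2 * π * s)| ≤ A := by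
    have hlo : log (2 * π * a) ≤ log (2 * π * s) :=
      log_le_log (by positivity) (by gcongr; exact hs.1)
    have hhi : log (2 * π * s) ≤ log (2 * π * b) :=
      log_le_log (by positivity) (by gcongr; exact hs.2)
    rw [abs_mul, neg_div, abs_neg, abs_of_nonneg (by positivity)]
    refine mul_le_mul_of_nonneg_left ?_ (by positivity)
    exact (abs_le_max_abs_abs hlo hhi).trans (max_le_add_of_nonneg (abs_nonneg _) (abs_nonneg _))
  have upper := log_le_log (smoothing_gaussD_pos hs₀ x) (smoothing_gaussD_le_rpow (μ := μ) hs₀ x)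
  rw [log_rpow (by positivity)] at upper
  have lower := le_log_smoothing_gaussD hμ hs₀ x
  have moment : (∫ z, ‖x - z‖ ^ 2 ∂μ) / (2 * s) ≤ (‖x‖ ^ 2 + M) / a := by
    calc _ ≤ (2 * ‖x‖ ^ 2 + 2 * M) / (2 * a) := by
          gcongr
          · exact integral_norm_sub_sq_le hμ x
          · exact hs.1
      _ = _ := by field_simp
  have total : A + (‖x‖ ^ 2 + M) / a ≤ (A + (M + 1) / a) * (1 + ‖x‖ ^ 2) := by
    have h : (A + (M + 1) / a) * (1 + ‖x‖ ^ 2) =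
      A + (‖x‖ ^ 2 + M) / a + (A * ‖x‖ ^ 2 + 1 / a + M / a * ‖x‖ ^ 2) := by ring
    rw [h]
    exact le_add_of_nonneg_right (by positivity)
  have : 0 ≤ (‖x‖ ^ 2 + M) / a := by positivity
  rw [abs_le] at prefactor ⊢
  constructor <;> linarith

theorem integrable_negMulLog_smoothing_gaussD (hμ : Integrable (fun z => ‖z‖ ^ 2) μ)
    (ht : 0 < t) : Integrable fun x => negMulLog (smoothing μ (gaussD d t) x) := by
  obtain ⟨A, -, hlog⟩ := exists_abs_log_smoothing_gaussD_le hμ (b := t) ht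
  simp_rw [negMulLog, neg_mul_comm, mul_comm _ (-log _)]
  exact (hasGaussianDecay_gaussD ht).integrable_smul_smoothing hμ
    (continuous_log_smoothing_gaussD ht).neg.aestronglyMeasurable
    fun x => (abs_neg _).trans_le (hlog t (left_mem_Icc.2 le_rfl) x)

theorem exists_abs_neg_log_smoothing_gaussD_sub_one_le (hμ : Integrable (fun z => ‖z‖ ^ 2) μ)
    {a b : ℝ} (ha : 0 < a) : ∃ C, 0 ≤ C ∧ ∀ s ∈ Icc a b, ∀ x,
      |-log (smoothing μ (gaussD d s) x) - 1| ≤ C * (1 + ‖x‖ ^ 2) := by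
  obtain ⟨C, hC, hlog⟩ := exists_abs_log_smoothing_gaussD_le hμ (b := b) ha
  refine ⟨C + 1, by positivity, fun s hs x => (abs_sub _ _).trans ?_⟩
  rw [abs_neg, abs_one]
  linarith [hlog s hs x, sq_nonneg ‖x‖]

theorem hasDerivAt_entG (hμ : Integrable (fun z => ‖z‖ ^ 2) μ) (ht : 0 < t) :
    HasDerivAt (entG d μ) (∫ x, (-log (smoothing μ (gaussD d t) x) - 1) *
      smoothing μ (gaussDy d t) x) t := by
  obtain ⟨A, hA, hlog⟩ := exists_abs_neg_log_smoothing_gaussD_sub_one_le hμ (b := 2 * t)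
    (half_pos ht)
  obtain ⟨C, -, hdt⟩ := exists_abs_smoothing_gaussDy_le (μ := μ) (b := 2 * t) (half_pos ht)
    (by positivity)
  have hnhds : Icc (t / 2) (2 * t) ∈ 𝓝 t := Icc_mem_nhds (half_lt_self ht) (by linarith)
  have pos_of_mem {s} (hs : s ∈ Icc (t / 2) (2 * t)) : 0 < s := (half_pos ht).trans_le hs.1
  have integrable_bound : Integrable fun x =>
      (1 + ‖x‖ ^ 2) • smoothing μ (gaussD d (2 * (2 * t))) x :=
    (hasGaussianDecay_gaussD (by positivity)).integrable_one_add_norm_sq_smul_smoothing hμ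
  refine (hasDerivAt_integral_of_dominated_loc_of_deriv_le
    (F := fun s x => negMulLog (smoothing μ (gaussD d s) x))
    (F' := fun s x => (-log (smoothing μ (gaussD d s) x) - 1) * smoothing μ (gaussDy d s) x)
    (bound := fun x => A * C * ((1 + ‖x‖ ^ 2) • smoothing μ (gaussD d (2 * (2 * t))) x))
    hnhds ?_ (integrable_negMulLog_smoothing_gaussD hμ ht) ?_ ?_
    (integrable_bound.const_mul _) ?_).2
  · filter_upwards [hnhds] with s hs
    exact (continuous_negMulLog.comp
      (continuous_smoothing_gaussD (pos_of_mem hs))).aestronglyMeasurable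
  · exact ((continuous_log_smoothing_gaussD ht).neg.sub continuous_const).aestronglyMeasurable.mul
      (integrable_smoothing (hasGaussianDecay_gaussDy ht).integrable).aestronglyMeasurable
  · refine .of_forall fun x s hs => ?_
    calc _ = |-log (smoothing μ (gaussD d s) x) - 1| * |smoothing μ (gaussDy d s) x| := abs_mul _ _
      _ ≤ A * (1 + ‖x‖ ^ 2) * (C * smoothing μ (gaussD d (2 * (2 * t))) x) := by
          gcongr
          · exact hlog s hs x
          · exact hdt s hs x
      _ = _ := by
          rw [smul_eq_mul]
          ring
  · refine .of_forall fun x s hs => ?_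
    exact (hasDerivAt_negMulLog (smoothing_gaussD_pos (μ := μ) (pos_of_mem hs) x).ne').comp s
      (hasDerivAt_smoothing_gaussD (pos_of_mem hs) x)

theorem integral_neg_log_sub_one_mul_eq_fisherInfo (hμ : Integrable (fun z => ‖z‖ ^ 2) μ)
    (ht : 0 < t) : ∫ x, (-log (smoothing μ (gaussD d t) x) - 1) * smoothing μ (gaussDy d t) x =
      fisherInfo μ t / 2 := by
  set p := smoothing μ (gaussD d t)
  set F := smoothing μ (gaussGrad d t)
  have p_pos : ∀ x, 0 < p x := smoothing_gaussD_pos ht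
  have hasFDerivAt_log (x) : HasFDerivAt (fun y => -log (p y) - 1)
      (-((p x)⁻¹ • innerSL ℝ (F x))) x :=
    ((hasFDerivAt_smoothing_gaussD ht x).log (p_pos x).ne').neg.sub_const 1
  obtain ⟨A, -, hlog⟩ := exists_abs_neg_log_smoothing_gaussD_sub_one_le hμ (b := t) ht
  have log_bound (x) := hlog t (left_mem_Icc.2 le_rfl) x
  have log_meas : AEStronglyMeasurable fun y => -log (p y) - 1 :=
    ((continuous_log_smoothing_gaussD ht).neg.sub continuous_const).aestronglyMeasurable
  have flux_integrable : Integrable fun x => ‖-((p x)⁻¹ • innerSL ℝ (F x))‖ * ‖F x‖ := by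
    refine (integrable_norm_sq_smoothing_gaussGrad_div (μ := μ) ht).congr (.of_forall fun x => ?_)
    simp only [norm_neg, norm_smul, innerSL_apply_norm, norm_inv, norm_of_nonneg (p_pos x).le]
    ring
  have green := integral_mul_trace_eq_neg_integral_apply (F := F) hasFDerivAt_log
    (hasFDerivAt_smoothing_gaussGrad ht)
    ((hasGaussianDecay_gaussGrad ht).integrable_smul_smoothing hμ log_meas log_bound)
    ((hasGaussianDecay_gaussHess ht).integrable_smul_smoothing hμ log_meas log_bound)
    flux_integrable
  have flux_eq (x) : (-((p x)⁻¹ • innerSL ℝ (F x))) (F x) = -(‖F x‖ ^ 2 / p x) := by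
    simp [div_eq_inv_mul]
  simp_rw [trace_smoothing_gaussHess ht, flux_eq, integral_neg, neg_neg, mul_left_comm _ (2 : ℝ),
    integral_const_mul] at green
  rw [fisherInfo, ← green]
  ring

theorem hasDerivAt_entG_fisherInfo (hμ : Integrable (fun z => ‖z‖ ^ 2) μ) (ht : 0 < t) :
    HasDerivAt (entG d μ) (fisherInfo μ t / 2) t := by
  rw [← integral_neg_log_sub_one_mul_eq_fisherInfo hμ ht]
  exact hasDerivAt_entG hμ ht

end Entropy

section Convolution

variable {d : ℕ} {u v : ℝ}

theorem integral_gaussD_mul_gaussDy_sub (hu : 0 < u) (hv : 0 < v)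
    (w : EuclideanSpace ℝ (Fin d)) :
    ∫ y, gaussD d v y * gaussDy d u (w - y) = gaussDy d (u + v) w := by
  have semigroup : (fun s => ∫ y, gaussD d v y * gaussD d s (w - y)) =ᶠ[𝓝 u]
      fun s => gaussD d (s + v) w := by
    filter_upwards [lt_mem_nhds hu] with s hs using integral_gaussD_mul_gaussD_sub hs hv w
  have hderiv := (hasDerivAt_gaussD (by positivity : 0 < u + v) w).comp_add_const u v
  rw [gaussDy_eq (by positivity)]
  exact (hasDerivAt_integral_mul_gaussD (integrable_gaussD hv) hu w).unique
    (hderiv.congr_of_eventuallyEq semigroup)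

theorem integral_inner_gaussGrad_sub_gaussGrad (hu : 0 < u) (hv : 0 < v)
    (w : EuclideanSpace ℝ (Fin d)) :
    ∫ y, inner ℝ (gaussGrad d u (w - y)) (gaussGrad d v y) = 2 * gaussDy d (u + v) w := by
  have reflected_grad (y) : HasFDerivAt (fun y => gaussGrad d u (w - y))
      (-gaussHess d u (w - y)) y := by
    simpa [Function.comp_def] using
      (hasFDerivAt_gaussGrad (w - y)).comp y ((hasFDerivAt_id y).const_sub w)
  obtain ⟨A, hA⟩ := (hasGaussianDecay_gaussGrad (d := d) hu).exists_norm_le_const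
  obtain ⟨B, hB⟩ := (hasGaussianDecay_gaussHess (d := d) hu).exists_norm_le_const
  have grad_cont := (hasGaussianDecay_gaussGrad (d := d) hu).continuous
  have hess_cont := (hasGaussianDecay_gaussHess (d := d) hu).continuous
  have flux_integrable : Integrable fun y =>
      ‖innerSL ℝ (gaussGrad d v y)‖ * ‖gaussGrad d u (w - y)‖ := by
    simp only [innerSL_apply_norm]
    exact (hasGaussianDecay_gaussGrad hv).integrable.norm.mul_bdd (c := A) (by fun_prop)
      (.of_forall fun y => (norm_norm _).trans_le (hA _))
  have green := integral_mul_trace_eq_neg_integral_apply (hasFDerivAt_gaussD (t := v))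
    reflected_grad
    ((integrable_gaussD hv).smul_bdd A (by fun_prop) (.of_forall fun y => hA _))
    ((integrable_gaussD hv).smul_bdd B (by fun_prop)
      (.of_forall fun y => (norm_neg _).trans_le (hB _)))
    flux_integrable
  simp only [ContinuousLinearMap.toLinearMap_neg, map_neg, trace_gaussHess hu, mul_neg,
    integral_neg, neg_inj, innerSL_apply_apply, mul_left_comm _ (2 : ℝ), integral_const_mul,
    integral_gaussD_mul_gaussDy_sub hu hv] at green
  simp_rw [green, real_inner_comm]

theorem smoothing_conv_integral_inner_sub {V : Type*} [NormedAddCommGroup V]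
    [InnerProductSpace ℝ V] [CompleteSpace V] {μ ν : Measure (EuclideanSpace ℝ (Fin d))}
    [IsFiniteMeasure μ] [IsFiniteMeasure ν] {k l : EuclideanSpace ℝ (Fin d) → V}
    (hk : HasGaussianDecay k) (hl : HasGaussianDecay l) (x : EuclideanSpace ℝ (Fin d)) :
    smoothing (μ ∗ ν) (fun w => ∫ y, inner ℝ (k (w - y)) (l y)) x =
      ∫ y, inner ℝ (smoothing μ k (x - y)) (smoothing ν l y) := by
  have k_cont := hk.continuous
  have l_cont := hl.continuous
  obtain ⟨A, hA⟩ := hk.exists_norm_le_const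
  have shifted (p : EuclideanSpace ℝ (Fin d) × EuclideanSpace ℝ (Fin d)) :
      ∫ y, inner ℝ (k (x - (p.1 + p.2) - y)) (l y) =
        ∫ y, inner ℝ (k (x - y - p.1)) (l (y - p.2)) := by
    rw [← integral_sub_right_eq_self _ p.2]
    congr! 4
    abel
  have integrable_triple : Integrable (Function.uncurry
      fun (p : EuclideanSpace ℝ (Fin d) × EuclideanSpace ℝ (Fin d)) y =>
        inner ℝ (k (x - y - p.1)) (l (y - p.2))) ((μ.prod ν).prod volume) := by
    have hprod := (Integrable.convolution_integrand (.lsmul ℝ ℝ)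
      (integrable_const (μ := ν) (1 : ℝ)) hl.integrable).swap.comp_snd μ
    simp only [Function.comp_def, Prod.fst_swap, Prod.snd_swap, ContinuousLinearMap.lsmul_apply,
      one_smul] at hprod
    refine (((measurePreserving_prodAssoc μ ν volume).integrable_comp_of_integrable
      hprod).norm.const_mul A).mono'
      (Continuous.aestronglyMeasurable (by unfold Function.uncurry; fun_prop))
      (.of_forall fun q => (norm_inner_le_norm _ _).trans ?_)
    exact mul_le_mul_of_nonneg_right (hA _) (norm_nonneg _)
  have integral_pair (y) : ∫ p, inner ℝ (k (x - y - p.1)) (l (y - p.2)) ∂μ.prod ν =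
      inner ℝ (smoothing μ k (x - y)) (smoothing ν l y) :=
    integral_prod_bilin (innerSL ℝ) (hk.integrable_comp_sub _) (hl.integrable_comp_sub _)
  have meas : StronglyMeasurable fun w => ∫ y, inner ℝ (k (x - w - y)) (l y) :=
    StronglyMeasurable.integral_prod_right
      (f := fun w y => inner ℝ (k (x - w - y)) (l y))
      (Continuous.stronglyMeasurable (by unfold Function.uncurry; fun_prop))
  rw [smoothing, Measure.conv, integral_map (by fun_prop) meas.aestronglyMeasurable]
  simp only [shifted, integral_integral_swap integrable_triple, integral_pair]

theorem smoothing_conv_gaussDy {μ ν : Measure (EuclideanSpace ℝ (Fin d))} [IsFiniteMeasure μ]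
    [IsFiniteMeasure ν] (hu : 0 < u) (hv : 0 < v) (x : EuclideanSpace ℝ (Fin d)) :
    smoothing (μ ∗ ν) (gaussDy d (u + v)) x =
      (∫ y, inner ℝ (smoothing μ (gaussGrad d u) (x - y)) (smoothing ν (gaussGrad d v) y)) / 2 := by
  have kernel_eq : gaussDy d (u + v) =
      fun w => (∫ y, inner ℝ (gaussGrad d u (w - y)) (gaussGrad d v y)) / 2 := by
    funext w
    rw [integral_inner_gaussGrad_sub_gaussGrad hu hv, mul_div_cancel_left₀ _ two_ne_zero]
  rw [← smoothing_conv_integral_inner_sub (hasGaussianDecay_gaussGrad hu)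
    (hasGaussianDecay_gaussGrad hv), kernel_eq]
  exact integral_div _ _

theorem integral_abs_smoothing_conv_gaussDy_le {μ ν : Measure (EuclideanSpace ℝ (Fin d))}
    [IsFiniteMeasure μ] [IsFiniteMeasure ν] (hu : 0 < u) (hv : 0 < v) :
    ∫ x, |smoothing (μ ∗ ν) (gaussDy d (u + v)) x| ≤
      (∫ x, ‖smoothing μ (gaussGrad d u) x‖) * (∫ x, ‖smoothing ν (gaussGrad d v) x‖) / 2 := by
  simp_rw [smoothing_conv_gaussDy hu hv, abs_div, abs_two, integral_div]
  gcongr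
  exact integral_abs_integral_inner_sub_le
    (integrable_smoothing (hasGaussianDecay_gaussGrad hu).integrable)
    (integrable_smoothing (hasGaussianDecay_gaussGrad hv).integrable)

end Convolution

section Detail

variable {d : ℕ} {μ ν : Measure (EuclideanSpace ℝ (Fin d))}

theorem integral_abs_smoothing_conv_gaussDy_le_sqrt [IsProbabilityMeasure μ]
    [IsProbabilityMeasure ν] {u v : ℝ} (hu : 0 < u) (hv : 0 < v) :
    ∫ x, |smoothing (μ ∗ ν) (gaussDy d (u + v)) x| ≤
      √(fisherInfo μ u / 2 * (fisherInfo ν v / 2)) := by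
  refine (integral_abs_smoothing_conv_gaussDy_le hu hv).trans (le_sqrt_of_sq_le ?_)
  calc _ = (∫ x, ‖smoothing μ (gaussGrad d u) x‖) ^ 2 / 2 *
        ((∫ x, ‖smoothing ν (gaussGrad d v) x‖) ^ 2 / 2) := by ring
    _ ≤ _ := by
      have fisher_u := sq_integral_norm_smoothing_gaussGrad_le_fisherInfo (μ := μ) hu
      have fisher_v := sq_integral_norm_smoothing_gaussGrad_le_fisherInfo (μ := ν) hv
      have := (sq_nonneg _).trans fisher_u
      gcongr

end Detail

theorem statement9_general {d : ℕ} (μ ν : Measure (EuclideanSpace ℝ (Fin d)))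
    [IsProbabilityMeasure μ] [IsProbabilityMeasure ν] (hμ : Integrable (fun z => ‖z‖ ^ 2) μ)
    (hν : Integrable (fun z => ‖z‖ ^ 2) ν) (r u v : ℝ) (hu : 0 < u) (hv : 0 < v)
    (huv : r ^ 2 = u + v) :
    ∃ Du Dv : ℝ, HasDerivAt (entG d μ) Du u ∧ HasDerivAt (entG d ν) Dv v ∧
      detail d (μ ∗ ν) r ≤
        r ^ 2 / 2 * Real.Gamma ((d : ℝ) / 2) * ((d : ℝ) / (2 * Real.exp 1)) ^ (-(d : ℝ) / 2) *
          Real.sqrt (Du * Dv) := by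
  refine ⟨_, _, hasDerivAt_entG_fisherInfo hμ hu, hasDerivAt_entG_fisherInfo hν hv, ?_⟩
  have : 0 ≤ Gamma ((d : ℝ) / 2) := Gamma_nonneg_of_nonneg (by positivity)
  calc detail d (μ ∗ ν) r
      = r ^ 2 / 2 * Gamma (d / 2) * (d / (2 * exp 1)) ^ (-(d : ℝ) / 2) *
          ∫ x, |smoothing (μ ∗ ν) (gaussDy d (u + v)) x| := by
        simp only [detail, huv, smoothing]
        ring
    _ ≤ _ := by
        gcongr
        exact integral_abs_smoothing_conv_gaussDy_le_sqrt hu hv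

theorem statement9 {d : ℕ} (μ ν : Measure (EuclideanSpace ℝ (Fin d)))
    [IsProbabilityMeasure μ] [IsProbabilityMeasure ν]
    (Kμ Kν : Set (EuclideanSpace ℝ (Fin d))) (hKμ : IsCompact Kμ) (hμK : μ Kμᶜ = 0)
    (hKν : IsCompact Kν) (hνK : ν Kνᶜ = 0)
    (r u v : ℝ) (hr : 0 < r) (hu : 0 < u) (hv : 0 < v) (huv : r ^ 2 = u + v) :
    ∃ Du Dv : ℝ, HasDerivWithinAt (entG d μ) Du (Set.Ioi u) u ∧
      HasDerivWithinAt (entG d ν) Dv (Set.Ioi v) v ∧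
      detail d (μ ∗ ν) r ≤
        r ^ 2 / 2 * Real.Gamma ((d : ℝ) / 2) * ((d : ℝ) / (2 * Real.exp 1)) ^ (-(d : ℝ) / 2) *
          Real.sqrt (Du * Dv) := by
  obtain ⟨Du, Dv, hDu, hDv, hdetail⟩ := statement9_general μ ν
    (integrable_norm_sq_of_measure_compl_eq_zero hKμ hμK)
    (integrable_norm_sq_of_measure_compl_eq_zero hKν hνK) r u v hu hv huv
  exact ⟨Du, Dv, hDu.hasDerivWithinAt, hDv.hasDerivWithinAt, hdetail⟩
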